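/- Let G be a measurable, 2π-periodic (in each variable) function on ℝ². Then ∫_{I²} (1/√(F₊(x,z))) · G(x, h(x,z)) dx dz = ∫_{I²} 2 · 𝟙(F₋(x,y) > 0)/√(F₋(x,y)) · G(x,y) dx dy, provided either G ≥ 0 or one of the two integrals is absolutely convergent. -/

import Mathlib

open MeasureTheory Real Set Filter
open scoped Topology ENNReal ComplexConjugate

noncomputable section

/-- The fundamental periodic cell `I = [0, 2π)`. -/
def II : Set ℝ := Set.Ico 0 (2 * π)

/-- Lebesgue measure restricted to `I`. -/
def muI : Measure ℝ := volume.restrict II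

/-- The dispersion relation `ω(x) = |sin(x/2)|`. -/
def omg (x : ℝ) : ℝ := |Real.sin (x / 2)|

/-- `Ω(x,y,z) = ω(x) + ω(y) − ω(z) − ω(x+y−z)`. -/
def Omg (x y z : ℝ) : ℝ := omg x + omg y - omg z - omg (x + y - z)

/-- The representative of `x` modulo `2π` lying in `[0, 2π)`. -/
def mod2pi (x : ℝ) : ℝ := x - 2 * π * (⌊x / (2 * π)⌋ : ℝ)

/-- `h` on the fundamental cell: `h(x,z) = (z−x)/2 + 2 arcsin( tan(|z−x|/4) cos((x+z)/4) )`. -/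
def h0 (x z : ℝ) : ℝ :=
  (z - x) / 2 + 2 * Real.arcsin (Real.tan (|z - x| / 4) * Real.cos ((x + z) / 4))

/-- The extension of `h` to all of `ℝ²`: `h(x,z) = h(x mod 2π, z mod 2π) − (x − (x mod 2π))`. -/
def hFPU (x z : ℝ) : ℝ := h0 (mod2pi x) (mod2pi z) - (x - mod2pi x)

/-- `F₊(x,y) = (cos(x/2)+cos(y/2))² + 4 sin(x/2) sin(y/2)`. -/
def Fp (x y : ℝ) : ℝ :=
  (Real.cos (x / 2) + Real.cos (y / 2)) ^ 2 + 4 * Real.sin (x / 2) * Real.sin (y / 2)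

/-- `F₋(x,y) = (cos(x/2)+cos(y/2))² − 4 sin(x/2) sin(y/2)`. -/
def Fm (x y : ℝ) : ℝ :=
  (Real.cos (x / 2) + Real.cos (y / 2)) ^ 2 - 4 * Real.sin (x / 2) * Real.sin (y / 2)

/-- The kernel `K₁(x,y) = 4·𝟙(F₋(x,y) > 0)/√(F₋(x,y))`. -/
def K1 (x y : ℝ) : ℝ := if 0 < Fm x y then 4 / Real.sqrt (Fm x y) else 0

/-- The kernel `K₂(x,y) = 2/√(F₊(x,y))`. -/
def K2 (x y : ℝ) : ℝ := 2 / Real.sqrt (Fp x y)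

/-- `V(x) = ∫_I K₂(x,y) dy`. -/
def VV (x : ℝ) : ℝ := ∫ y in II, K2 x y

/-- `W(x) = sin²(x/2)·V(x)`. -/
def WW (x : ℝ) : ℝ := Real.sin (x / 2) ^ 2 * VV x

/-! For `0 < x < z < 2π`, the value `y = h(x, z)` is the unique solution in `(0, z - x)` of
`sin (x / 2) + sin (y / 2) + sin ((x + y - z) / 2) = sin (z / 2)`. This relation is preserved by
`(x, y, z) ↦ (-x, z, y)`, which exchanges `F₊(x, z)` and `F₋(x, y)`; on its solutions both become
perfect squares, and implicit differentiation in `z` gives `|∂h/∂z| = √F₋(x, y) / √F₊(x, z)`.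

Solved for `z` instead, the relation reads `sin α = r` with `α = (2z - x - y) / 4 ∈ (0, π)` and
`r = tan ((x + y) / 4) cos ((x - y) / 4)`, where `F₋(x, y) > 0` is equivalent to `r < 1`. So every
`y ∈ (0, 2π - x)` with `F₋(x, y) > 0` has exactly two preimages `z ∈ (x, 2π)`, one on each side of
`α = π / 2`: this is the factor `2`.
The range `z < x` reduces to this one by the reflections `x ↦ 2π - x`, `z ↦ 2π - z`, `h ↦ -h`. -/

/-- The resonance relation `ω(x) + ω(y) = ω(z) + ω(x + y - z)` on the sheet `0 < x`, `0 < y`,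
`x + y ≤ z < 2π`, where `ω(x + y - z) = -sin((x + y - z) / 2)`. -/
def IsResonant (x y z : ℝ) : Prop :=
  sin (x / 2) + sin (y / 2) + sin ((x + y - z) / 2) = sin (z / 2)

/-- The sine of the angle `(2z - x - y) / 4` determined by a resonance, as a function of `x, y`. -/
def resonantSin (x y : ℝ) : ℝ := tan ((x + y) / 4) * cos ((x - y) / 4)

theorem isResonant_neg_iff {x y z : ℝ} : IsResonant (-x) z y ↔ IsResonant x y z := by
  unfold IsResonant
  rw [show (-x + z - y) / 2 = -((x + y - z) / 2) by ring, neg_div, sin_neg, sin_neg]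
  constructor <;> intro h <;> linarith

theorem Fp_eq_Fm_neg (x z : ℝ) : Fp x z = Fm (-x) z := by
  simp only [Fp, Fm, neg_div, cos_neg, sin_neg]
  ring

theorem IsResonant.Fm_eq {x y z : ℝ} (h : IsResonant x y z) :
    Fm x y = (cos (z / 2) + cos ((x + y - z) / 2)) ^ 2 := by
  have hcos : cos (x / 2 + y / 2) = cos (z / 2 + (x + y - z) / 2) := by ring_nf
  rw [cos_add, cos_add] at hcos
  unfold IsResonant at h
  unfold Fm
  linear_combination sin_sq_add_cos_sq (x / 2) + sin_sq_add_cos_sq (y / 2)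
    - sin_sq_add_cos_sq (z / 2) - sin_sq_add_cos_sq ((x + y - z) / 2) + 2 * hcos
    - (sin (x / 2) + sin (y / 2) + sin (z / 2) - sin ((x + y - z) / 2)) * h

theorem IsResonant.Fp_eq {x y z : ℝ} (h : IsResonant x y z) :
    Fp x z = (cos (y / 2) + cos ((x + y - z) / 2)) ^ 2 := by
  rw [Fp_eq_Fm_neg, (isResonant_neg_iff.2 h).Fm_eq,
    show (-x + z - y) / 2 = -((x + y - z) / 2) by ring, cos_neg]

theorem isResonant_iff_sin_eq {x y z : ℝ} (hc : cos ((x + y) / 4) ≠ 0) :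
    IsResonant x y z ↔ sin ((2 * z - x - y) / 4) = resonantSin x y := by
  have hadd : sin (x / 2) + sin (y / 2) = 2 * sin ((x + y) / 4) * cos ((x - y) / 4) := by
    rw [sin_add_sin]; ring_nf
  have hsub : sin (z / 2) - sin ((x + y - z) / 2)
      = 2 * sin ((2 * z - x - y) / 4) * cos ((x + y) / 4) := by
    rw [sin_sub_sin]; ring_nf
  rw [IsResonant, ← eq_sub_iff_add_eq, hadd, hsub, resonantSin, tan_eq_sin_div_cos,
    div_mul_eq_mul_div, eq_div_iff hc]
  constructor <;> intro h <;> linarith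

theorem cos_quarter_pos {u : ℝ} (hu : -(2 * π) < u) (hu' : u < 2 * π) : 0 < cos (u / 4) :=
  cos_pos_of_mem_Ioo ⟨by linarith, by linarith⟩

theorem Fm_eq_one_sub_resonantSin_sq {x y : ℝ} (hc : cos ((x + y) / 4) ≠ 0) :
    Fm x y = 4 * cos ((x + y) / 4) ^ 2 * (1 - resonantSin x y ^ 2) := by
  have hx : x / 2 = (x + y) / 4 + (x - y) / 4 := by ring
  have hy : y / 2 = (x + y) / 4 - (x - y) / 4 := by ring
  have htan : cos ((x + y) / 4) * tan ((x + y) / 4) = sin ((x + y) / 4) := by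
    rw [mul_comm, tan_mul_cos hc]
  rw [Fm, hx, hy, cos_add, cos_sub, sin_add, sin_sub, resonantSin, ← htan]
  linear_combination 4 * cos ((x + y) / 4) ^ 2 * sin_sq_add_cos_sq ((x - y) / 4)

theorem sin_lt_resonantSin {x y : ℝ} (hx : 0 < x) (hy : 0 < y) (hxy : x + y < 2 * π) :
    sin ((x + y) / 4) < resonantSin x y := by
  have htan : 0 < tan ((x + y) / 4) :=
    tan_pos_of_pos_of_lt_pi_div_two (by linarith) (by linarith)
  have hcos : cos ((x + y) / 4) < cos ((x - y) / 4) := by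
    rw [← cos_abs ((x - y) / 4)]
    refine cos_lt_cos_of_nonneg_of_le_pi (abs_nonneg _) (by linarith) ?_
    rw [abs_lt]
    constructor <;> linarith
  rw [← tan_mul_cos (cos_quarter_pos (by linarith) hxy).ne']
  exact mul_lt_mul_of_pos_left hcos htan

theorem resonantSin_pos {x y : ℝ} (hx : 0 < x) (hy : 0 < y) (hxy : x + y < 2 * π) :
    0 < resonantSin x y :=
  (sin_pos_of_pos_of_lt_pi (by linarith) (by linarith)).trans (sin_lt_resonantSin hx hy hxy)

theorem Fm_pos_iff_resonantSin_lt_one {x y : ℝ} (hx : 0 < x) (hy : 0 < y)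
    (hxy : x + y < 2 * π) : 0 < Fm x y ↔ resonantSin x y < 1 := by
  have hc := cos_quarter_pos (by linarith) hxy
  rw [Fm_eq_one_sub_resonantSin_sq hc.ne', mul_pos_iff_of_pos_left (by positivity), sub_pos,
    sq_lt_one_iff₀ (resonantSin_pos hx hy hxy).le]

theorem resonantSin_strictMonoOn {x : ℝ} (hx : 0 < x) :
    StrictMonoOn (resonantSin x) (Ioo 0 (2 * π - x)) := by
  have hsplit : ∀ y ∈ Ioo 0 (2 * π - x),
      resonantSin x y = sin ((y - x) / 4) + sin (x / 2) / cos ((x + y) / 4) := by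
    rintro y ⟨hy, hy'⟩
    have hc := (cos_quarter_pos (u := x + y) (by linarith) (by linarith)).ne'
    have hsin : sin (x / 2) = sin ((x + y) / 4) * cos ((x - y) / 4)
        + cos ((x + y) / 4) * sin ((x - y) / 4) := by
      rw [← sin_add]; ring_nf
    rw [hsin, show (y - x) / 4 = -((x - y) / 4) by ring, sin_neg, resonantSin, tan_eq_sin_div_cos]
    field_simp
    ring
  intro y hy y' hy' hlt
  rw [hsplit y hy, hsplit y' hy']
  obtain ⟨hy0, -⟩ := hy
  obtain ⟨-, hy2⟩ := hy'
  have hsin : sin ((y - x) / 4) < sin ((y' - x) / 4) :=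
    sin_lt_sin_of_lt_of_le_pi_div_two (by linarith) (by linarith) (by linarith)
  have hcos : cos ((x + y') / 4) < cos ((x + y) / 4) :=
    cos_lt_cos_of_nonneg_of_le_pi (by linarith) (by linarith) (by linarith)
  have hx2 : 0 < sin (x / 2) := sin_pos_of_pos_of_lt_pi (by linarith) (by linarith)
  exact add_lt_add hsin
    (div_lt_div_of_pos_left hx2 (cos_quarter_pos (by linarith) (by linarith)) hcos)

theorem h0_of_le {x z : ℝ} (hxz : x ≤ z) :
    h0 x z = (z - x) / 2 + 2 * arcsin (resonantSin (-x) z) := by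
  rw [h0, abs_of_nonneg (sub_nonneg.2 hxz), resonantSin,
    show -x + z = z - x by ring, show (-x - z) / 4 = -((x + z) / 4) by ring, cos_neg]

theorem abs_resonantSin_neg_lt {x z : ℝ} (hx : 0 < x) (hxz : x < z) (hz : z < 2 * π) :
    |resonantSin (-x) z| < sin ((z - x) / 4) := by
  have htan : 0 < tan ((z - x) / 4) :=
    tan_pos_of_pos_of_lt_pi_div_two (by linarith) (by linarith)
  have hcos : |cos ((x + z) / 4)| < cos ((z - x) / 4) := by
    rw [abs_lt, ← cos_pi_sub]
    constructor <;>
      exact cos_lt_cos_of_nonneg_of_le_pi (by linarith) (by linarith) (by linarith)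
  rw [resonantSin, show -x + z = z - x by ring, show (-x - z) / 4 = -((x + z) / 4) by ring,
    cos_neg, abs_mul, abs_of_pos htan,
    ← tan_mul_cos (cos_quarter_pos (u := z - x) (by linarith) (by linarith)).ne']
  exact mul_lt_mul_of_pos_left hcos htan

theorem h0_mem_Ioo {x z : ℝ} (hx : 0 < x) (hxz : x < z) (hz : z < 2 * π) :
    h0 x z ∈ Ioo 0 (z - x) := by
  obtain ⟨hlow, hupp⟩ := abs_lt.1 (abs_resonantSin_neg_lt hx hxz hz)
  have hlow' : -((z - x) / 4) < arcsin (resonantSin (-x) z) := by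
    rwa [lt_arcsin_iff_sin_lt' ⟨by linarith, by linarith⟩, sin_neg]
  have hupp' : arcsin (resonantSin (-x) z) < (z - x) / 4 := by
    rwa [arcsin_lt_iff_lt_sin' ⟨by linarith, by linarith⟩]
  rw [h0_of_le hxz.le]
  constructor <;> linarith

theorem isResonant_h0 {x z : ℝ} (hx : 0 < x) (hxz : x < z) (hz : z < 2 * π) :
    IsResonant x (h0 x z) z := by
  obtain ⟨hlow, hupp⟩ := abs_lt.1 (abs_resonantSin_neg_lt hx hxz hz)
  have hone := sin_le_one ((z - x) / 4)
  have hsin : sin (arcsin (resonantSin (-x) z)) = resonantSin (-x) z :=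
    sin_arcsin (by linarith) (by linarith)
  have hangle : (2 * h0 x z - -x - z) / 4 = arcsin (resonantSin (-x) z) := by
    rw [h0_of_le hxz.le]
    ring
  rw [← isResonant_neg_iff, isResonant_iff_sin_eq (cos_quarter_pos (by linarith) (by linarith)).ne',
    hangle, hsin]

theorem IsResonant.h0_eq {x y z : ℝ} (h : IsResonant x y z) (hx : 0 < x) (hy : 0 < y)
    (hxyz : x + y < z) (hz : z < 2 * π) : h0 x z = y := by
  rw [← isResonant_neg_iff,
    isResonant_iff_sin_eq (cos_quarter_pos (by linarith) (by linarith)).ne'] at h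
  rw [h0_of_le (by linarith), ← h, arcsin_sin (by linarith) (by linarith)]
  ring

/-- The angle `α = (2z - x - y) / 4` with `y = h(x, z)`. It solves `sin α = resonantSin x y`, so
its position relative to `π / 2` tells the two preimages `z` of `y` apart. -/
def resonantAngle (x z : ℝ) : ℝ := (2 * z - x - h0 x z) / 4

theorem resonantAngle_mem_Ioo {x z : ℝ} (hx : 0 < x) (hxz : x < z) (hz : z < 2 * π) :
    resonantAngle x z ∈ Ioo 0 π := by
  obtain ⟨hpos, hlt⟩ := h0_mem_Ioo hx hxz hz
  rw [resonantAngle]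
  constructor <;> linarith

theorem sin_resonantAngle {x z : ℝ} (hx : 0 < x) (hxz : x < z) (hz : z < 2 * π) :
    sin (resonantAngle x z) = resonantSin x (h0 x z) := by
  obtain ⟨hpos, hlt⟩ := h0_mem_Ioo hx hxz hz
  exact (isResonant_iff_sin_eq (cos_quarter_pos (by linarith) (by linarith)).ne').1
    (isResonant_h0 hx hxz hz)

theorem mem_Ioo_of_sin_lt_sin {s α : ℝ} (hs : s ≤ π / 2) (hα : 0 < α) (hα' : α < π)
    (h : sin s < sin α) : α ∈ Ioo s (π - s) := by
  constructor <;> by_contra! hle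
  · exact h.not_ge (sin_le_sin_of_le_of_le_pi_div_two (by linarith) hs hle)
  · rw [← sin_pi_sub α] at h
    exact h.not_ge (sin_le_sin_of_le_of_le_pi_div_two (by linarith) hs (by linarith))

-- `resonantSin x y` exceeds `sin ((x + y) / 4)`, which confines both solutions `α` of
-- `sin α = resonantSin x y`, hence both preimages `z` of `y`, to `x + y < z < 2π`.
theorem h0_add_two_mul_of_sin_eq {x y α : ℝ} (hx : 0 < x) (hy : 0 < y) (hxy : x + y < 2 * π)
    (hα : 0 < α) (hα' : α < π) (hsin : sin α = resonantSin x y) :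
    (x + y) / 2 + 2 * α ∈ Ioo x (2 * π) ∧ h0 x ((x + y) / 2 + 2 * α) = y := by
  obtain ⟨hlow, hupp⟩ : α ∈ Ioo ((x + y) / 4) (π - (x + y) / 4) :=
    mem_Ioo_of_sin_lt_sin (by linarith) hα hα' (hsin ▸ sin_lt_resonantSin hx hy hxy)
  have hres : IsResonant x y ((x + y) / 2 + 2 * α) := by
    rw [isResonant_iff_sin_eq (cos_quarter_pos (by linarith) hxy).ne', ← hsin]
    ring_nf
  exact ⟨⟨by linarith, by linarith⟩, hres.h0_eq hx hy (by linarith) (by linarith)⟩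

theorem hasDerivAt_resonantSin {x y : ℝ} (hc : cos ((x + y) / 4) ≠ 0) :
    HasDerivAt (resonantSin x)
      ((cos ((x - y) / 4) / cos ((x + y) / 4) ^ 2
        + tan ((x + y) / 4) * sin ((x - y) / 4)) / 4) y := by
  have hsum : HasDerivAt (fun y => (x + y) / 4) (1 / 4) y :=
    ((hasDerivAt_id' y).const_add x).div_const 4
  have hdiff : HasDerivAt (fun y => (x - y) / 4) (-1 / 4) y :=
    ((hasDerivAt_id' y).const_sub x).div_const 4
  have htan : HasDerivAt (fun y => tan ((x + y) / 4)) _ y :=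
    HasDerivAt.comp (h₂ := tan) y (hasDerivAt_tan hc) hsum
  refine (htan.mul hdiff.cos).congr_deriv ?_
  ring

theorem half_add_eq_div_of_sin_eq {p q θ : ℝ} (hq : cos q ≠ 0) (hθ : cos θ ≠ 0)
    (h : sin θ = tan q * cos p) :
    1 / 2 + 2 * (1 / cos θ * ((cos p / cos q ^ 2 + tan q * sin p) / 4))
      = (cos (q - p) + cos (θ - q)) / (cos (q + θ) + cos (θ - q)) := by
  have hden : cos (q + θ) + cos (θ - q) = 2 * cos q * cos θ := by
    rw [cos_add, cos_sub]
    ring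
  rw [hden, cos_sub, cos_sub, h, tan_eq_sin_div_cos]
  field_simp
  linear_combination -4 * cos p * sin_sq_add_cos_sq q

-- The derivative is the one that implicit differentiation of the resonance relation predicts.
theorem hasDerivAt_h0 {x z : ℝ} (hx : 0 < x) (hxz : x < z) (hz : z < 2 * π) :
    HasDerivAt (h0 x) ((cos (z / 2) + cos ((x + h0 x z - z) / 2))
      / (cos (h0 x z / 2) + cos ((x + h0 x z - z) / 2))) z := by
  obtain ⟨hlow, hupp⟩ := abs_lt.1 (abs_resonantSin_neg_lt hx hxz hz)
  have hone := sin_le_one ((z - x) / 4)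
  have hq : cos ((-x + z) / 4) ≠ 0 := (cos_quarter_pos (by linarith) (by linarith)).ne'
  have hsinθ : sin (arcsin (resonantSin (-x) z)) = tan ((-x + z) / 4) * cos ((-x - z) / 4) :=
    sin_arcsin (by linarith) (by linarith)
  have hcosθ : cos (arcsin (resonantSin (-x) z)) ≠ 0 := (cos_pos_of_mem_Ioo
    ⟨neg_pi_div_two_lt_arcsin.2 (by linarith), arcsin_lt_pi_div_two.2 (by linarith)⟩).ne'
  have hderiv : HasDerivAt (fun z => (z - x) / 2 + 2 * arcsin (resonantSin (-x) z)) _ z :=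
    (((hasDerivAt_id' z).sub_const x).div_const 2).add
      (((hasDerivAt_arcsin (by linarith) (by linarith)).comp z
        (hasDerivAt_resonantSin hq)).const_mul 2)
  refine (hderiv.congr_of_eventuallyEq ?_).congr_deriv ?_
  · filter_upwards [lt_mem_nhds hxz] with z' hz' using h0_of_le hz'.le
  rw [← cos_arcsin, half_add_eq_div_of_sin_eq hq hcosθ hsinθ, h0_of_le hxz.le]
  ring_nf

theorem abs_deriv_h0_mul {x z : ℝ} (hx : 0 < x) (hxz : x < z) (hz : z < 2 * π)
    (hF : 0 < Fm x (h0 x z)) :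
    |deriv (h0 x) z| * (1 / √(Fm x (h0 x z))) = 1 / √(Fp x z) := by
  have hres := isResonant_h0 hx hxz hz
  have hF' := (sqrt_pos.2 hF).ne'
  rw [(hasDerivAt_h0 hx hxz hz).deriv, abs_div, ← sqrt_sq_eq_abs, ← sqrt_sq_eq_abs,
    ← hres.Fm_eq, ← hres.Fp_eq]
  field_simp

/-- The points `z ∈ (x, 2π)` whose resonant angle lies in `J`. For `J = (0, π/2)` and
`J = (π/2, π)` these are the two sets on which `h(x, ·)` is injective. -/
def resonantBranch (x : ℝ) (J : Set ℝ) : Set ℝ := Ioo x (2 * π) ∩ resonantAngle x ⁻¹' J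

theorem bijOn_h0_resonantBranch {x : ℝ} (hx : 0 < x) {J : Set ℝ} (hJ : J ⊆ Ioo 0 π)
    (hsin : BijOn sin J (Ioo 0 1)) :
    BijOn (h0 x) (resonantBranch x J) (Ioo 0 (2 * π - x) ∩ {y | 0 < Fm x y}) := by
  refine ⟨?_, ?_, ?_⟩
  · rintro z ⟨⟨hxz, hz⟩, hα⟩
    obtain ⟨hpos, hlt⟩ := h0_mem_Ioo hx hxz hz
    refine ⟨⟨hpos, by linarith⟩, (Fm_pos_iff_resonantSin_lt_one hx hpos (by linarith)).2 ?_⟩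
    rw [← sin_resonantAngle hx hxz hz]
    exact (hsin.mapsTo hα).2
  · rintro z ⟨⟨hxz, hz⟩, hα⟩ z' ⟨⟨hxz', hz'⟩, hα'⟩ heq
    have hangle : resonantAngle x z = resonantAngle x z' := hsin.injOn hα hα' <| by
      rw [sin_resonantAngle hx hxz hz, sin_resonantAngle hx hxz' hz', heq]
    rw [resonantAngle, resonantAngle, heq] at hangle
    linarith
  · rintro y ⟨⟨hy, hy'⟩, hF⟩
    have hxy : x + y < 2 * π := by linarith
    have hT : resonantSin x y ∈ Ioo 0 1 :=
      ⟨resonantSin_pos hx hy hxy, (Fm_pos_iff_resonantSin_lt_one hx hy hxy).1 hF⟩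
    obtain ⟨α, hα, hsinα⟩ := hsin.surjOn hT
    obtain ⟨hmem, hh⟩ := h0_add_two_mul_of_sin_eq hx hy hxy (hJ hα).1 (hJ hα).2 hsinα
    have hangle : resonantAngle x ((x + y) / 2 + 2 * α) = α := by
      rw [resonantAngle, hh]
      ring
    exact ⟨_, ⟨hmem, by rwa [mem_preimage, hangle]⟩, hh⟩

theorem bijOn_sin_Ioo_zero_pi_div_two : BijOn sin (Ioo 0 (π / 2)) (Ioo 0 1) := by
  have hsub : Ioo 0 (π / 2) ⊆ Icc (-(π / 2)) (π / 2) :=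
    Ioo_subset_Icc_self.trans (Icc_subset_Icc_left (by linarith [pi_pos]))
  refine ⟨fun α hα => ⟨sin_pos_of_pos_of_lt_pi hα.1 (by linarith [hα.1, hα.2]), ?_⟩,
    injOn_sin.mono hsub, fun t ht => ⟨arcsin t, ⟨arcsin_pos.2 ht.1, arcsin_lt_pi_div_two.2 ht.2⟩,
      sin_arcsin (by linarith [ht.1]) ht.2.le⟩⟩
  rw [← sin_pi_div_two]
  exact sin_lt_sin_of_lt_of_le_pi_div_two (hsub hα).1 le_rfl hα.2

theorem bijOn_sin_Ioo_pi_div_two_pi : BijOn sin (Ioo (π / 2) π) (Ioo 0 1) := by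
  have hsub : BijOn (π - ·) (Ioo (π / 2) π) (Ioo 0 (π / 2)) := by
    have himage : (π - ·) '' Ioo (π / 2) π = Ioo 0 (π / 2) := by
      rw [image_const_sub_Ioo, sub_self, sub_half]
    rw [← himage]
    exact sub_right_injective.injOn.bijOn_image
  exact (bijOn_sin_Ioo_zero_pi_div_two.comp hsub).congr fun α _ => sin_pi_sub α

theorem subsingleton_resonantBranch_pi_div_two {x : ℝ} (hx : 0 < x) :
    (resonantBranch x {π / 2}).Subsingleton := by
  have hsin_eq_one : ∀ z ∈ resonantBranch x {π / 2},
      h0 x z ∈ Ioo 0 (2 * π - x) ∧ resonantSin x (h0 x z) = 1 := by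
    rintro z ⟨⟨hxz, hz⟩, hα⟩
    obtain ⟨hpos, hlt⟩ := h0_mem_Ioo hx hxz hz
    refine ⟨⟨hpos, by linarith⟩, ?_⟩
    rw [← sin_resonantAngle hx hxz hz, mem_singleton_iff.1 hα, sin_pi_div_two]
  intro z hz z' hz'
  obtain ⟨hmem, hone⟩ := hsin_eq_one z hz
  obtain ⟨hmem', hone'⟩ := hsin_eq_one z' hz'
  have heq : h0 x z = h0 x z' :=
    (resonantSin_strictMonoOn hx).injOn hmem hmem' (hone.trans hone'.symm)
  have hangle : resonantAngle x z = resonantAngle x z' := hz.2.trans hz'.2.symm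
  rw [resonantAngle, resonantAngle, heq] at hangle
  linarith

theorem measurable_h0 : Measurable fun p : ℝ × ℝ => h0 p.1 p.2 := by
  simp only [h0, tan_eq_sin_div_cos]
  fun_prop

theorem measurable_Fm : Measurable fun p : ℝ × ℝ => Fm p.1 p.2 := by
  unfold Fm
  fun_prop

theorem measurable_Fp : Measurable fun p : ℝ × ℝ => Fp p.1 p.2 := by
  unfold Fp
  fun_prop

theorem measurable_mod2pi : Measurable mod2pi := by
  unfold mod2pi
  fun_prop

theorem measurable_hFPU : Measurable fun p : ℝ × ℝ => hFPU p.1 p.2 := by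
  have hfst : Measurable fun p : ℝ × ℝ => mod2pi p.1 := measurable_mod2pi.comp measurable_fst
  have hsnd : Measurable fun p : ℝ × ℝ => mod2pi p.2 := measurable_mod2pi.comp measurable_snd
  exact (measurable_h0.comp (hfst.prodMk hsnd)).sub (measurable_fst.sub hfst)

theorem measurableSet_resonantBranch (x : ℝ) {J : Set ℝ} (hJ : MeasurableSet J) :
    MeasurableSet (resonantBranch x J) := by
  have hh : Measurable (h0 x) := measurable_h0.comp measurable_prodMk_left
  have hangle : Measurable (resonantAngle x) := by
    unfold resonantAngle
    fun_prop
  exact measurableSet_Ioo.inter (hangle hJ)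

theorem lintegral_inter_Fm_pos (x : ℝ) (s : Set ℝ) (g : ℝ → ℝ≥0∞) :
    ∫⁻ y in s ∩ {y | 0 < Fm x y}, ENNReal.ofReal (1 / √(Fm x y)) * g y
      = ∫⁻ y in s, ENNReal.ofReal (1 / √(Fm x y)) * g y := by
  have hFm : Measurable (Fm x) := by
    unfold Fm
    fun_prop
  rw [inter_comm, ← Measure.restrict_restrict (measurableSet_lt measurable_const hFm)]
  refine setLIntegral_eq_of_support_subset fun y hy => ?_
  by_contra hy'
  exact hy (by simp [sqrt_eq_zero_of_nonpos (not_lt.1 hy')])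

theorem lintegral_resonantBranch {x : ℝ} (hx : 0 < x) {J : Set ℝ} (hJm : MeasurableSet J)
    (hJ : J ⊆ Ioo 0 π) (hsin : BijOn sin J (Ioo 0 1)) (g : ℝ → ℝ≥0∞) :
    ∫⁻ z in resonantBranch x J, ENNReal.ofReal (1 / √(Fp x z)) * g (h0 x z)
      = ∫⁻ y in Ioo 0 (2 * π - x), ENNReal.ofReal (1 / √(Fm x y)) * g y := by
  have hbij := bijOn_h0_resonantBranch hx hJ hsin
  have hmeas := measurableSet_resonantBranch x hJm
  have hderiv : ∀ z ∈ resonantBranch x J,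
      HasDerivWithinAt (h0 x) (deriv (h0 x) z) (resonantBranch x J) z := fun z hz =>
    (hasDerivAt_h0 hx hz.1.1 hz.1.2).differentiableAt.hasDerivAt.hasDerivWithinAt
  have hweight : ∀ z ∈ resonantBranch x J, ENNReal.ofReal (1 / √(Fp x z)) * g (h0 x z)
      = ENNReal.ofReal |deriv (h0 x) z|
        * (ENNReal.ofReal (1 / √(Fm x (h0 x z))) * g (h0 x z)) := fun z hz => by
    rw [← abs_deriv_h0_mul hx hz.1.1 hz.1.2 (hbij.mapsTo hz).2,
      ENNReal.ofReal_mul (abs_nonneg _), mul_assoc]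
  rw [← lintegral_inter_Fm_pos, ← hbij.image_eq,
    lintegral_image_eq_lintegral_abs_deriv_mul hmeas hderiv hbij.injOn]
  exact setLIntegral_congr_fun hmeas hweight

theorem resonantBranch_union_ae_eq_Ioo {x : ℝ} (hx : 0 < x) :
    (resonantBranch x (Ioo 0 (π / 2)) ∪ resonantBranch x (Ioo (π / 2) π) : Set ℝ)
      =ᵐ[volume] (Ioo x (2 * π) : Set ℝ) := by
  have hsplit : Ioo x (2 * π) = resonantBranch x (Ioo 0 (π / 2))
      ∪ resonantBranch x (Ioo (π / 2) π) ∪ resonantBranch x {π / 2} := by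
    rw [resonantBranch, resonantBranch, resonantBranch, ← inter_union_distrib_left,
      ← inter_union_distrib_left, ← preimage_union, ← preimage_union, eq_comm, inter_eq_left]
    rintro z ⟨hxz, hz⟩
    obtain ⟨hpos, hlt⟩ := resonantAngle_mem_Ioo hx hxz hz
    rcases lt_trichotomy (resonantAngle x z) (π / 2) with h | h | h
    · exact Or.inl (Or.inl ⟨hpos, h⟩)
    · exact Or.inr h
    · exact Or.inl (Or.inr ⟨h, hlt⟩)
  have hnull : volume (resonantBranch x {π / 2}) = 0 :=
    (subsingleton_resonantBranch_pi_div_two hx).measure_zero volume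
  rw [hsplit]
  exact (union_ae_eq_left_of_ae_eq_empty (ae_eq_empty.2 hnull)).symm

theorem lintegral_h0_Ioo_left {x : ℝ} (hx : 0 < x) (g : ℝ → ℝ≥0∞) :
    ∫⁻ z in Ioo x (2 * π), ENNReal.ofReal (1 / √(Fp x z)) * g (h0 x z)
      = 2 * ∫⁻ y in Ioo 0 (2 * π - x), ENNReal.ofReal (1 / √(Fm x y)) * g y := by
  have hπ := pi_pos
  have hdisj : Disjoint (resonantBranch x (Ioo 0 (π / 2))) (resonantBranch x (Ioo (π / 2) π)) :=
    disjoint_left.2 fun z hz hz' => lt_asymm hz.2.2 hz'.2.1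
  rw [← setLIntegral_congr (resonantBranch_union_ae_eq_Ioo hx),
    lintegral_union (measurableSet_resonantBranch x measurableSet_Ioo) hdisj,
    lintegral_resonantBranch hx measurableSet_Ioo (Ioo_subset_Ioo_right (by linarith))
      bijOn_sin_Ioo_zero_pi_div_two,
    lintegral_resonantBranch hx measurableSet_Ioo (Ioo_subset_Ioo_left (by linarith))
      bijOn_sin_Ioo_pi_div_two_pi, ← two_mul]

theorem h0_two_pi_sub (x z : ℝ) : h0 x (2 * π - z) = -h0 (2 * π - x) z := by
  unfold h0
  rw [show 2 * π - z - x = -(z - (2 * π - x)) by ring, abs_neg,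
    show (x + (2 * π - z)) / 4 = π - (2 * π - x + z) / 4 by ring, cos_pi_sub, mul_neg, arcsin_neg]
  ring

theorem Fm_two_pi_sub (x y : ℝ) : Fm x (2 * π - y) = Fm (2 * π - x) y := by
  unfold Fm
  rw [show (2 * π - y) / 2 = π - y / 2 by ring, show (2 * π - x) / 2 = π - x / 2 by ring]
  simp only [cos_pi_sub, sin_pi_sub]
  ring

theorem Fp_two_pi_sub (x z : ℝ) : Fp x (2 * π - z) = Fp (2 * π - x) z := by
  unfold Fp
  rw [show (2 * π - z) / 2 = π - z / 2 by ring, show (2 * π - x) / 2 = π - x / 2 by ring]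
  simp only [cos_pi_sub, sin_pi_sub]
  ring

theorem lintegral_Ioo_sub_left (a b c : ℝ) (f : ℝ → ℝ≥0∞) :
    ∫⁻ z in Ioo (c - b) (c - a), f (c - z) = ∫⁻ z in Ioo a b, f z := by
  rw [← preimage_const_sub_Ioo]
  exact (Measure.measurePreserving_sub_left volume c).setLIntegral_comp_preimage_emb
    (MeasurableEquiv.subLeft c).measurableEmbedding f (Ioo a b)

theorem lintegral_h0_Ioo_right {x : ℝ} (hx : x < 2 * π) {g : ℝ → ℝ≥0∞}
    (hg : Function.Periodic g (2 * π)) :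
    ∫⁻ z in Ioo 0 x, ENNReal.ofReal (1 / √(Fp x z)) * g (h0 x z)
      = 2 * ∫⁻ y in Ioo (2 * π - x) (2 * π), ENNReal.ofReal (1 / √(Fm x y)) * g y := by
  have hleft := lintegral_h0_Ioo_left (sub_pos.2 hx) fun y => g (-y)
  rw [← lintegral_Ioo_sub_left 0 x (2 * π), ← lintegral_Ioo_sub_left (2 * π - x) (2 * π) (2 * π)]
  simpa only [h0_two_pi_sub, Fp_two_pi_sub, Fm_two_pi_sub, hg.sub_eq', sub_zero, sub_self]
    using hleft

theorem lintegral_II_eq_add {x : ℝ} (hx : x ∈ Ioo 0 (2 * π)) (f : ℝ → ℝ≥0∞) :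
    ∫⁻ z in II, f z = (∫⁻ z in Ioo 0 x, f z) + ∫⁻ z in Ioo x (2 * π), f z := by
  rw [II, ← Ico_union_Ico_eq_Ico hx.1.le hx.2.le,
    lintegral_union measurableSet_Ico (Ico_disjoint_Ico_same), setLIntegral_congr Ioo_ae_eq_Ico,
    setLIntegral_congr Ioo_ae_eq_Ico]

theorem lintegral_h0_II {x : ℝ} (hx : x ∈ Ioo 0 (2 * π)) {g : ℝ → ℝ≥0∞}
    (hg : Function.Periodic g (2 * π)) :
    ∫⁻ z in II, ENNReal.ofReal (1 / √(Fp x z)) * g (h0 x z)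
      = 2 * ∫⁻ y in II, ENNReal.ofReal (1 / √(Fm x y)) * g y := by
  have hx' : 2 * π - x ∈ Ioo 0 (2 * π) := ⟨sub_pos.2 hx.2, sub_lt_self _ hx.1⟩
  rw [lintegral_II_eq_add hx, lintegral_II_eq_add hx', lintegral_h0_Ioo_right hx.2 hg,
    lintegral_h0_Ioo_left hx.1, mul_add, add_comm]

theorem mod2pi_eq_self {x : ℝ} (hx : x ∈ II) : mod2pi x = x := by
  have hfloor : ⌊x / (2 * π)⌋ = 0 :=
    Int.floor_eq_zero_iff.2 ⟨div_nonneg hx.1 two_pi_pos.le, (div_lt_one two_pi_pos).2 hx.2⟩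
  rw [mod2pi, hfloor, Int.cast_zero, mul_zero, sub_zero]

theorem mod2pi_periodic : Function.Periodic mod2pi (2 * π) := fun x => by
  rw [mod2pi, mod2pi, add_div, div_self two_pi_pos.ne', Int.floor_add_one, Int.cast_add,
    Int.cast_one]
  ring

theorem apply_mod2pi_of_periodic {α : Type*} {f : ℝ → α} (hf : Function.Periodic f (2 * π))
    (x : ℝ) : f (mod2pi x) = f x := by
  rw [mod2pi, mul_comm]
  exact hf.sub_int_mul_eq _

theorem hFPU_eq_h0 {x z : ℝ} (hx : x ∈ II) (hz : z ∈ II) : hFPU x z = h0 x z := by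
  rw [hFPU, mod2pi_eq_self hx, mod2pi_eq_self hz, sub_self, sub_zero]

-- Where `r ≤ 0` both sides vanish, by `√r = 0` and `1 / 0 = 0`.
theorem ite_pos_one_div_sqrt (r : ℝ) : (if 0 < r then 1 / √r else 0) = 1 / √r := by
  split_ifs with h
  · rfl
  · rw [sqrt_eq_zero_of_nonpos (not_lt.1 h), div_zero]

theorem lintegral_comp_hFPU {G : ℝ → ℝ → ℝ≥0∞} (hmeas : Measurable fun p : ℝ × ℝ => G p.1 p.2)
    (hper : ∀ x, Function.Periodic (G x) (2 * π)) :
    ∫⁻ p in II ×ˢ II, ENNReal.ofReal (1 / √(Fp p.1 p.2)) * G p.1 (hFPU p.1 p.2)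
      = ∫⁻ p in II ×ˢ II, ENNReal.ofReal (2 * (1 / √(Fm p.1 p.2))) * G p.1 p.2 := by
  have hleft : Measurable fun p : ℝ × ℝ =>
      ENNReal.ofReal (1 / √(Fp p.1 p.2)) * G p.1 (hFPU p.1 p.2) :=
    (measurable_Fp.sqrt.const_div 1).ennreal_ofReal.mul
      (hmeas.comp (measurable_fst.prodMk measurable_hFPU))
  have hright : Measurable fun p : ℝ × ℝ => ENNReal.ofReal (2 * (1 / √(Fm p.1 p.2))) * G p.1 p.2 :=
    ((measurable_Fm.sqrt.const_div 1).const_mul 2).ennreal_ofReal.mul hmeas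
  have hfiber : ∀ x ∈ Ioo 0 (2 * π),
      ∫⁻ z in II, ENNReal.ofReal (1 / √(Fp x z)) * G x (hFPU x z)
        = ∫⁻ y in II, ENNReal.ofReal (2 * (1 / √(Fm x y))) * G x y := fun x hx => by
    calc ∫⁻ z in II, ENNReal.ofReal (1 / √(Fp x z)) * G x (hFPU x z)
        = ∫⁻ z in II, ENNReal.ofReal (1 / √(Fp x z)) * G x (h0 x z) := by
          refine setLIntegral_congr_fun measurableSet_Ico fun z hz => ?_
          simp only [hFPU_eq_h0 (Ioo_subset_Ico_self hx) hz]
      _ = 2 * ∫⁻ y in II, ENNReal.ofReal (1 / √(Fm x y)) * G x y := lintegral_h0_II hx (hper x)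
      _ = ∫⁻ y in II, ENNReal.ofReal (2 * (1 / √(Fm x y))) * G x y := by
          rw [← lintegral_const_mul' _ _ ENNReal.ofNat_ne_top]
          simp only [ENNReal.ofReal_mul zero_le_two, ENNReal.ofReal_ofNat, mul_assoc]
  rw [Measure.volume_eq_prod, setLIntegral_prod _ hleft.aemeasurable,
    setLIntegral_prod _ hright.aemeasurable]
  refine setLIntegral_congr_fun_ae measurableSet_Ico ?_
  filter_upwards [Measure.ae_ne volume 0] with x hx0 hx
  exact hfiber x ⟨hx.1.lt_of_ne' hx0, hx.2⟩

theorem measurable_prodMk_mod2pi {f : ℝ × ℝ → ℝ} (hf : Measurable f) :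
    Measurable fun p : ℝ × ℝ => (p.1, mod2pi (f p)) :=
  measurable_fst.prodMk (measurable_mod2pi.comp hf)

theorem map_withDensity_Fp_eq :
    ((volume.restrict (II ×ˢ II)).withDensity fun p => ENNReal.ofReal (1 / √(Fp p.1 p.2))).map
        (fun p => (p.1, mod2pi (hFPU p.1 p.2)))
      = (volume.restrict (II ×ˢ II)).withDensity
          fun p => ENNReal.ofReal (2 * (1 / √(Fm p.1 p.2))) := by
  have hmap := measurable_prodMk_mod2pi measurable_hFPU
  refine Measure.ext_of_lintegral _ fun f hf => ?_
  have hfmap : Measurable fun p : ℝ × ℝ => f (p.1, mod2pi (hFPU p.1 p.2)) := hf.comp hmap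
  rw [lintegral_map hf hmap, lintegral_withDensity_eq_lintegral_mul _
      (measurable_Fp.sqrt.const_div 1).ennreal_ofReal hfmap,
    lintegral_withDensity_eq_lintegral_mul _
      ((measurable_Fm.sqrt.const_div 1).const_mul 2).ennreal_ofReal hf]
  refine (lintegral_comp_hFPU (G := fun x y => f (x, mod2pi y))
      (hf.comp (measurable_prodMk_mod2pi measurable_snd))
    fun x => mod2pi_periodic.comp fun y => f (x, y)).trans ?_
  refine setLIntegral_congr_fun (measurableSet_Ico.prod measurableSet_Ico) fun p hp => ?_
  simp only [mod2pi_eq_self hp.2, Pi.mul_apply]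

theorem integral_comp_hFPU {E : Type*} [NormedAddCommGroup E] [NormedSpace ℝ E] {G : ℝ → ℝ → E}
    (hmeas : StronglyMeasurable fun p : ℝ × ℝ => G p.1 p.2)
    (hper : ∀ x, Function.Periodic (G x) (2 * π)) :
    ∫ p in II ×ˢ II, (1 / √(Fp p.1 p.2)) • G p.1 (hFPU p.1 p.2)
      = ∫ p in II ×ˢ II, (2 * (1 / √(Fm p.1 p.2))) • G p.1 p.2 := by
  have hmap := measurable_prodMk_mod2pi measurable_hFPU
  have hpush := integral_map (μ := (volume.restrict (II ×ˢ II)).withDensity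
    fun p => ENNReal.ofReal (1 / √(Fp p.1 p.2))) hmap.aemeasurable hmeas.aestronglyMeasurable
  rw [map_withDensity_Fp_eq, integral_withDensity_eq_integral_toReal_smul
      ((measurable_Fm.sqrt.const_div 1).const_mul 2).ennreal_ofReal
      (.of_forall fun _ => ENNReal.ofReal_lt_top),
    integral_withDensity_eq_integral_toReal_smul
      (measurable_Fp.sqrt.const_div 1).ennreal_ofReal
      (.of_forall fun _ => ENNReal.ofReal_lt_top)] at hpush
  have hp : ∀ r, (ENNReal.ofReal (1 / √r)).toReal = 1 / √r := fun r =>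
    ENNReal.toReal_ofReal (by positivity)
  have hm : ∀ r, (ENNReal.ofReal (2 * (1 / √r))).toReal = 2 * (1 / √r) := fun r =>
    ENNReal.toReal_ofReal (by positivity)
  simp only [hp, hm, apply_mod2pi_of_periodic (hper _)] at hpush
  exact hpush.symm

theorem change_of_variables_K2_to_K1_general {E : Type*} [NormedAddCommGroup E] [NormedSpace ℝ E]
    [CompleteSpace E] (G : ℝ → ℝ → E)
    (hmeas : StronglyMeasurable fun p : ℝ × ℝ => G p.1 p.2)
    (hper : ∀ x y : ℝ, G x (y + 2 * π) = G x y) :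
    ∫⁻ p in II ×ˢ II, ‖(1 / √(Fp p.1 p.2)) • G p.1 (hFPU p.1 p.2)‖ₑ
        = ∫⁻ p in II ×ˢ II,
            ‖(2 * (if 0 < Fm p.1 p.2 then 1 / √(Fm p.1 p.2) else 0)) • G p.1 p.2‖ₑ ∧
    ((IntegrableOn (fun p : ℝ × ℝ => (1 / √(Fp p.1 p.2)) • G p.1 (hFPU p.1 p.2)) (II ×ˢ II) ∨
        IntegrableOn
          (fun p : ℝ × ℝ =>
            (2 * (if 0 < Fm p.1 p.2 then 1 / √(Fm p.1 p.2) else 0)) • G p.1 p.2)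
          (II ×ˢ II)) →
      ∫ p in II ×ˢ II, (1 / √(Fp p.1 p.2)) • G p.1 (hFPU p.1 p.2)
        = ∫ p in II ×ˢ II,
            (2 * (if 0 < Fm p.1 p.2 then 1 / √(Fm p.1 p.2) else 0)) • G p.1 p.2) := by
  have hp : ∀ r, ‖1 / √r‖ₑ = ENNReal.ofReal (1 / √r) := fun r =>
    Real.enorm_of_nonneg (by positivity)
  have hm : ∀ r, ‖2 * (1 / √r)‖ₑ = ENNReal.ofReal (2 * (1 / √r)) := fun r =>
    Real.enorm_of_nonneg (by positivity)
  simp only [ite_pos_one_div_sqrt, enorm_smul, hp, hm]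
  exact ⟨lintegral_comp_hFPU (G := fun x y => ‖G x y‖ₑ) hmeas.enorm
      fun x y => congrArg enorm (hper x y),
    fun _ => integral_comp_hFPU hmeas hper⟩

/-- **Lemma 3.4 (change of variables `z ↦ y = h(x,z)`).**  For measurable, `2π`-periodic
`G : ℝ² → ℝ`,
`∫_{I²} G(x, h(x,z))/√(F₊(x,z)) dx dz = ∫_{I²} 2·𝟙(F₋(x,y) > 0) G(x,y)/√(F₋(x,y)) dx dy`,
in the sense of `[0,∞]`-valued integrals when `G ≥ 0`, and in the sense of Bochner integrals
as soon as one of the two integrals is absolutely convergent. -/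
theorem change_of_variables_K2_to_K1
    (G : ℝ → ℝ → ℝ)
    (hmeas : Measurable fun p : ℝ × ℝ => G p.1 p.2)
    (hper1 : ∀ x y : ℝ, G (x + 2 * π) y = G x y)
    (hper2 : ∀ x y : ℝ, G x (y + 2 * π) = G x y) :
    ((∀ x y : ℝ, 0 ≤ G x y) →
      ∫⁻ p in II ×ˢ II,
          ENNReal.ofReal ((1 / Real.sqrt (Fp p.1 p.2)) * G p.1 (hFPU p.1 p.2))
        = ∫⁻ p in II ×ˢ II,
            ENNReal.ofReal
              (2 * (if 0 < Fm p.1 p.2 then 1 / Real.sqrt (Fm p.1 p.2) else 0) * G p.1 p.2)) ∧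
    ((IntegrableOn
          (fun p : ℝ × ℝ => (1 / Real.sqrt (Fp p.1 p.2)) * G p.1 (hFPU p.1 p.2))
          (II ×ˢ II) ∨
        IntegrableOn
          (fun p : ℝ × ℝ =>
            2 * (if 0 < Fm p.1 p.2 then 1 / Real.sqrt (Fm p.1 p.2) else 0) * G p.1 p.2)
          (II ×ˢ II)) →
      ∫ p in II ×ˢ II, (1 / Real.sqrt (Fp p.1 p.2)) * G p.1 (hFPU p.1 p.2)
        = ∫ p in II ×ˢ II,
            2 * (if 0 < Fm p.1 p.2 then 1 / Real.sqrt (Fm p.1 p.2) else 0) * G p.1 p.2) := by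
  obtain ⟨hnorm, hint⟩ := change_of_variables_K2_to_K1_general G hmeas.stronglyMeasurable hper2
  refine ⟨fun hG => ?_, hint⟩
  convert hnorm using 3 with p p <;>
    exact (Real.enorm_of_nonneg (mul_nonneg (by positivity) (hG _ _))).symm
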